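/- arXiv:0911.5472 — 2 statements merged into one kernel-verified Lean document; each statement's English description precedes it below -/
import Mathlib

section
/- Case F1 restriction lemma: Let l be a prime with l ≡ 1 (mod 4), let r ≥ 1, let N = 4 l^r, and suppose p ≡ 3 (mod 4), the multiplicative order of p modulo l^r is φ(l^r), and f = φ(N)/2. Then the restriction of χ to the prime field is trivial: χ(ι(y)) = 1 for every nonzero y ∈ F_p, where ι : F_p → F_q is the canonical field embedding. -/
open Complex Polynomial IntermediateField

/-- The complex primitive `p`-th root of unity `exp(2πi/p)`. -/
noncomputable def zetaP (p : ℕ) : ℂ := Complex.exp (2 * Real.pi * Complex.I / p)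

/-- The Gauss sum `G(χ^λ) = ∑_{x ∈ F, x ≠ 0} χ^λ(x) ζ_p^{T(x)}`, where
`T` is the trace map from `F` down to `ZMod p`. -/
noncomputable def gaussSumN (p : ℕ) {F : Type} [Field F] [Fintype F] [Algebra (ZMod p) F]
    (χ : MulChar F ℂ) (lam : ℕ) : ℂ :=
  letI : DecidableEq F := Classical.decEq F
  ∑ x ∈ Finset.univ.filter (fun x : F => x ≠ 0),
    (χ ^ lam) x * zetaP p ^ (Algebra.trace (ZMod p) F x).val

/-- `√-m = i√m ∈ ℂ`. -/
noncomputable def sqrtNeg (m : ℕ) : ℂ := Real.sqrt m * Complex.I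

theorem sqrtNeg_sq (m : ℕ) : sqrtNeg m ^ 2 = -(m : ℂ) := by
  have h : ((Real.sqrt m : ℝ) : ℂ) ^ 2 = ((m : ℝ) : ℂ) := by
    rw [← Complex.ofReal_pow, Real.sq_sqrt (by positivity)]
  simp only [sqrtNeg, mul_pow, Complex.I_sq, h]
  push_cast
  ring

theorem isIntegral_sqrtNeg (m : ℕ) : IsIntegral ℚ (sqrtNeg m) := by
  refine ⟨X ^ 2 + C (m : ℚ), monic_X_pow_add_C _ (by norm_num), ?_⟩
  simp [sqrtNeg_sq]

/-- The class number `h(ℚ(√-m))` of the quadratic field `ℚ(√-m) ⊆ ℂ`. -/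
noncomputable def classNumSqrtNeg (m : ℕ) : ℕ :=
  haveI : FiniteDimensional ℚ ℚ⟮sqrtNeg m⟯ :=
    IntermediateField.adjoin.finiteDimensional (isIntegral_sqrtNeg m)
  haveI : CharZero ℚ⟮sqrtNeg m⟯ :=
    charZero_of_injective_algebraMap (algebraMap ℚ ℚ⟮sqrtNeg m⟯).injective
  haveI : NumberField ℚ⟮sqrtNeg m⟯ := ⟨⟩
  NumberField.classNumber ℚ⟮sqrtNeg m⟯

/-- `√p* = √p` if `p ≡ 1 (mod 4)` and `i√p` if `p ≡ 3 (mod 4)`. -/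
noncomputable def sqrtPStar (p : ℕ) : ℂ :=
  if p % 4 = 1 then (Real.sqrt p : ℂ) else (Real.sqrt p : ℂ) * Complex.I

/-!
Let `K ⊆ F` be the finite fields, `q = |K|`, `n = [F : K]` and `M = 1 + q + ⋯ + q ^ (n - 1)`. The
norm `x ↦ x ^ M` maps `Fˣ` onto `Kˣ`, so `χ` is trivial on `Kˣ` as soon as `χ ^ M = 1`. It remains
to see that `4 * l ^ r ∣ M`. Since `q ≡ -1 (mod 4)` and `n` is even, the terms of `M` cancel in
pairs modulo `4`. Modulo `l ^ r` we have `(q - 1) * M = q ^ n - 1 ≡ 0`, and `q - 1` is a unit: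
otherwise `q ≡ 1 (mod l)` would have order dividing `l ^ (r - 1)` modulo `l ^ r`, and `q` would not
be a primitive root.
-/

section GeomSum

variable {R : Type*} [CommRing R]

theorem add_one_dvd_geom_sum (a : R) {n : ℕ} (hn : Even n) :
    a + 1 ∣ ∑ i ∈ Finset.range n, a ^ i := by
  have hsum : ∑ i ∈ Finset.range n, a ^ i = ∑ i ∈ Finset.range n, (a ^ i - (-1) ^ i) := by
    rw [Finset.sum_sub_distrib, neg_one_geom_sum, if_pos hn, sub_zero]
  rw [hsum, ← sub_neg_eq_add]
  exact Finset.dvd_sum fun i _ ↦ sub_dvd_pow_sub_pow a (-1) i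

theorem dvd_geom_sum_of_isCoprime {a m : R} {n : ℕ} (hm : IsCoprime m (a - 1))
    (hn : m ∣ a ^ n - 1) : m ∣ ∑ i ∈ Finset.range n, a ^ i :=
  hm.dvd_of_dvd_mul_right (by rwa [geom_sum_mul])

end GeomSum

theorem totient_four_mul_of_odd {m : ℕ} (hm : Odd m) : (4 * m).totient = 2 * m.totient := by
  have hcoprime : Nat.Coprime 4 m := (Nat.coprime_two_left.2 hm).pow_left 2
  rw [Nat.totient_mul hcoprime, show Nat.totient 4 = 2 by decide]

section PrimitiveRoot

variable {l r : ℕ}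

theorem orderOf_intCast_zmod_pow_succ_dvd {a : ℤ} (ha : (l : ℤ) ∣ a - 1) (k : ℕ) :
    orderOf (a : ZMod (l ^ (k + 1))) ∣ l ^ k := by
  have hdvd : ((l ^ (k + 1) : ℕ) : ℤ) ∣ a ^ l ^ k - 1 := by
    simpa only [one_pow, Nat.cast_pow] using dvd_sub_pow_of_dvd_sub ha k
  rw [orderOf_dvd_iff_pow_eq_one, ← sub_eq_zero]
  exact_mod_cast (ZMod.intCast_zmod_eq_zero_iff_dvd _ _).2 hdvd

theorem not_dvd_sub_one_of_orderOf_eq_totient (hl : l.Prime) (hl2 : l ≠ 2) (hr : r ≠ 0) {a : ℤ}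
    (ha : orderOf (a : ZMod (l ^ r)) = (l ^ r).totient) : ¬ (l : ℤ) ∣ a - 1 := by
  intro hdvd
  obtain ⟨s, rfl⟩ := Nat.exists_eq_succ_of_ne_zero hr
  have htotient : l ^ s * (l - 1) ∣ l ^ s * 1 := by
    rw [← Nat.totient_prime_pow_succ hl, ← ha, mul_one]
    exact orderOf_intCast_zmod_pow_succ_dvd hdvd s
  have hl1 : l - 1 ∣ 1 := Nat.dvd_of_mul_dvd_mul_left (pow_pos hl.pos s) htotient
  exact hl2 (by have := Nat.dvd_one.1 hl1; omega)

theorem pow_dvd_geom_sum_of_orderOf_eq_totient (hl : l.Prime) (hl2 : l ≠ 2) {a : ℤ}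
    (ha : orderOf (a : ZMod (l ^ r)) = (l ^ r).totient) {n : ℕ} (hn : (l ^ r).totient ∣ n) :
    (l : ℤ) ^ r ∣ ∑ i ∈ Finset.range n, a ^ i := by
  obtain rfl | hr := eq_or_ne r 0
  · rw [pow_zero]
    exact one_dvd _
  have hcoprime : IsCoprime ((l : ℤ) ^ r) (a - 1) :=
    ((Nat.prime_iff_prime_int.1 hl).coprime_iff_not_dvd.2
      (not_dvd_sub_one_of_orderOf_eq_totient hl hl2 hr ha)).pow_left
  refine dvd_geom_sum_of_isCoprime hcoprime ?_
  have hpow : (a : ZMod (l ^ r)) ^ n = 1 := orderOf_dvd_iff_pow_eq_one.1 (ha ▸ hn)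
  rw [← Nat.cast_pow, ← ZMod.intCast_zmod_eq_zero_iff_dvd]
  push_cast
  exact sub_eq_zero.2 hpow

theorem four_mul_pow_dvd_geom_sum (hl : l.Prime) (hl2 : l ≠ 2) (hr : r ≠ 0) {q : ℕ}
    (hq4 : q % 4 = 3) (hq : orderOf (q : ZMod (l ^ r)) = (l ^ r).totient) {n : ℕ}
    (hn : (l ^ r).totient ∣ n) : 4 * l ^ r ∣ ∑ i ∈ Finset.range n, q ^ i := by
  have hlr : 2 < l ^ r :=
    (lt_of_le_of_ne hl.two_le hl2.symm).trans_le (Nat.le_self_pow hr l)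
  have hn_even : Even n := (Nat.totient_even hlr).trans_dvd hn
  have hfour : 4 ∣ ∑ i ∈ Finset.range n, q ^ i := by
    have hq1 : (4 : ℤ) ∣ q + 1 := by omega
    exact_mod_cast hq1.trans (add_one_dvd_geom_sum (q : ℤ) hn_even)
  have hpow : l ^ r ∣ ∑ i ∈ Finset.range n, q ^ i := by
    exact_mod_cast pow_dvd_geom_sum_of_orderOf_eq_totient hl hl2 (a := q) (by simpa) hn
  have hcoprime : Nat.Coprime 4 (l ^ r) :=
    (Nat.coprime_two_left.2 (hl.odd_of_ne_two hl2)).pow 2 r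
  exact hcoprime.mul_dvd_of_dvd_of_dvd hfour hpow

end PrimitiveRoot

theorem finrank_eq_of_natCard_eq_pow {K V : Type*} [DivisionRing K] [Finite K] [AddCommGroup V]
    [Module K V] [Module.Finite K V] {n : ℕ} (h : Nat.card V = Nat.card K ^ n) :
    Module.finrank K V = n :=
  Nat.pow_right_injective Finite.one_lt_card (Module.natCard_eq_pow_finrank.symm.trans h)

section FiniteField

variable {K F : Type*} [Field K] [Field F] [Finite F] [Algebra K F]
  {R : Type*} [CommMonoidWithZero R]

theorem mulChar_algebraMap_eq_one_of_orderOf_dvd {χ : MulChar F R}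
    (hχ : orderOf χ ∣ ∑ i ∈ Finset.range (Module.finrank K F), Nat.card K ^ i) {y : K}
    (hy : y ≠ 0) : χ (algebraMap K F y) = 1 := by
  obtain ⟨x, hx⟩ := FiniteField.unitsMap_norm_surjective K F (Units.mk0 y hy)
  have hnorm : Algebra.norm K (x : F) = y := congrArg Units.val hx
  rw [← hnorm, FiniteField.algebraMap_norm_eq_pow_sum, map_pow, ← MulChar.pow_apply_coe,
    orderOf_dvd_iff_pow_eq_one.1 hχ, MulChar.one_apply_coe]

theorem statement11_general {l r : ℕ} (hl : l.Prime) (hl2 : l ≠ 2) (hr : r ≠ 0)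
    (hq4 : Nat.card K % 4 = 3) (hq : orderOf (Nat.card K : ZMod (l ^ r)) = (l ^ r).totient)
    (hdeg : (l ^ r).totient ∣ Module.finrank K F) {χ : MulChar F R}
    (hχ : orderOf χ ∣ 4 * l ^ r) {y : K} (hy : y ≠ 0) : χ (algebraMap K F y) = 1 :=
  mulChar_algebraMap_eq_one_of_orderOf_dvd
    (hχ.trans (four_mul_pow_dvd_geom_sum hl hl2 hr hq4 hq hdeg)) hy

end FiniteField

theorem statement11 (p l r N f : ℕ) (hp : p.Prime) (hl : l.Prime) (hl4 : l % 4 = 1)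
    (hr : 1 ≤ r) (hN : N = 4 * l ^ r) (hNp : Nat.gcd N p = 1) (hp4 : p % 4 = 3)
    (hord : orderOf (p : ZMod (l ^ r)) = Nat.totient (l ^ r))
    (hf : orderOf (p : ZMod N) = f) (hind : f = Nat.totient N / 2)
    (F : Type) [Field F] [Fintype F] [Algebra (ZMod p) F]
    (hcard : Fintype.card F = p ^ f)
    (χ : MulChar F ℂ) (hχord : orderOf χ = N) :
    ∀ y : ZMod p, y ≠ 0 → χ (algebraMap (ZMod p) F y) = 1 := by
  have : Fact p.Prime := ⟨hp⟩
  have hl2 : l ≠ 2 := by omega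
  have hdeg : Module.finrank (ZMod p) F = (l ^ r).totient := finrank_eq_of_natCard_eq_pow <| by
    simp [hcard, hind, hN, totient_four_mul_of_odd (hl.odd_of_ne_two hl2).pow]
  exact fun y hy ↦ statement11_general hl hl2 (by omega) (by simpa) (by simpa) hdeg.symm.dvd
    (hχord.trans hN).dvd hy
end

section
/- Counting lemma: Let l be a prime with l ≡ 3 (mod 4) and let r ≥ 1. Among the integers s with 1 ≤ s ≤ 2 l^r and gcd(s, 2l) = 1, exactly φ(l^r)/2 + 1 of them satisfy s ≡ 1 (mod 4), and exactly φ(l^r)/2 - 1 of them satisfy s ≡ 3 (mod 4). -/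
open Complex Polynomial IntermediateField

/-!
Let `χ₄` be the nontrivial character modulo `4`, let `l` be odd and let `A` be the set of integers
in `[1, 2l^r]` that are prime to `2l`. The two counts add up to `#A = φ(2l^r) = φ(l^r)`, and their
difference is `∑ s ∈ A, χ₄ s`. Sieving out the primes dividing `l` one at a time rewrites this sum
in terms of the full sums of `χ₄` over `[1, 2l^r/d]` with `d ∣ l`. Each endpoint `2l^r/d` is
`2` modulo `4`, so each full sum is `1`, and the difference is `∏ p ∣ l, (1 - χ₄ p)`. This equals
`2` when `l` is a prime congruent to `3` modulo `4`.
-/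

section MultiplicativeSums

open Finset

theorem sum_Icc_one_filter_dvd {M : Type*} [AddCommMonoid M] (g : ℕ → M) {d : ℕ} (hd : 0 < d)
    (N : ℕ) : ∑ s ∈ Icc 1 N with d ∣ s, g s = ∑ t ∈ Icc 1 (N / d), g (d * t) := by
  have multiples_eq : {s ∈ Icc 1 N | d ∣ s} = (Icc 1 (N / d)).image (d * ·) := by
    ext s
    simp only [mem_filter, mem_image, mem_Icc, Nat.le_div_iff_mul_le hd, mul_comm _ d]
    constructor
    · rintro ⟨⟨hs, hsN⟩, t, rfl⟩
      exact ⟨t, ⟨Nat.pos_of_mul_pos_left hs, hsN⟩, rfl⟩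
    · rintro ⟨t, ⟨ht, htN⟩, rfl⟩
      exact ⟨⟨Nat.mul_pos hd ht, htN⟩, dvd_mul_right d t⟩
  rw [multiples_eq, sum_image (mul_right_injective₀ hd.ne').injOn]

variable {R : Type*} [CommRing R] {f : ℕ → R}

theorem sum_coprime_prime_mul (hf : ∀ a b, f (a * b) = f a * f b) {p n : ℕ} (hp : p.Prime)
    (hpn : ¬p ∣ n) (N : ℕ) :
    ∑ s ∈ Icc 1 N with s.Coprime (p * n), f s =
      ∑ s ∈ Icc 1 N with s.Coprime n, f s - f p * ∑ t ∈ Icc 1 (N / p) with t.Coprime n, f t := by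
  have coprime_iff (s : ℕ) : s.Coprime (p * n) ↔ s.Coprime n ∧ ¬p ∣ s := by
    rw [Nat.coprime_mul_iff_right, Nat.coprime_comm, hp.coprime_iff_not_dvd, and_comm]
  have sum_multiples : ∑ s ∈ {s ∈ Icc 1 N | s.Coprime n} with p ∣ s, f s =
      f p * ∑ t ∈ Icc 1 (N / p) with t.Coprime n, f t := by
    have coprime_mul_iff (t : ℕ) : (p * t).Coprime n ↔ t.Coprime n := by
      rw [Nat.coprime_mul_iff_left, and_iff_right (hp.coprime_iff_not_dvd.mpr hpn)]
    rw [filter_comm, sum_filter, sum_Icc_one_filter_dvd _ hp.pos, ← sum_filter, mul_sum]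
    simp only [coprime_mul_iff, hf]
  rw [eq_sub_iff_add_eq, ← sum_multiples, add_comm,
    ← sum_filter_add_sum_filter_not {s ∈ Icc 1 N | s.Coprime n} (fun s ↦ p ∣ s)]
  simp only [filter_filter, coprime_iff]

theorem sum_coprime_eq_mul_prod_primeFactors (hf : ∀ a b, f (a * b) = f a * f b) {n N : ℕ} {c : R}
    (hn : n ≠ 0) (hc : ∀ d, d ∣ n → ∑ t ∈ Icc 1 (N / d), f t = c) :
    ∑ s ∈ Icc 1 N with s.Coprime n, f s = c * ∏ p ∈ n.primeFactors, (1 - f p) := by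
  induction n using induction_on_primes generalizing N with
  | zero => exact absurd rfl hn
  | one => simpa using hc 1 (one_dvd 1)
  | prime_mul p n hp ih =>
    have hn' : n ≠ 0 := right_ne_zero_of_mul hn
    have sum_N := ih hn' fun d hd ↦ hc d (hd.mul_left p)
    by_cases hpn : p ∣ n
    · have coprime_iff (s : ℕ) : s.Coprime (p * n) ↔ s.Coprime n := by
        rw [Nat.coprime_mul_iff_right, and_iff_right_of_imp (Nat.Coprime.coprime_dvd_right hpn)]
      have primeFactors_eq : (p * n).primeFactors = n.primeFactors := by
        rw [Nat.primeFactors_mul hp.ne_zero hn',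
          union_eq_right.mpr (Nat.primeFactors_mono hpn hn')]
      simpa only [coprime_iff, primeFactors_eq] using sum_N
    · have sum_N_div_p := ih (N := N / p) hn' fun d hd ↦ by
        rw [Nat.div_div_eq_div_mul]
        exact hc (p * d) (Nat.mul_dvd_mul_left p hd)
      have primeFactors_eq : (p * n).primeFactors = insert p n.primeFactors := by
        rw [Nat.primeFactors_mul hp.ne_zero hn', hp.primeFactors, singleton_union]
      rw [sum_coprime_prime_mul hf hp hpn, sum_N, sum_N_div_p, primeFactors_eq,
        prod_insert fun hmem ↦ hpn (Nat.dvd_of_mem_primeFactors hmem)]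
      ring

end MultiplicativeSums

section ResiduesModFour

open Finset ZMod

theorem sum_Icc_one_χ₄ (N : ℕ) :
    ∑ s ∈ Icc 1 N, χ₄ s = if N % 4 = 1 ∨ N % 4 = 2 then 1 else 0 := by
  induction N with
  | zero => rfl
  | succ N ih =>
    rw [sum_Icc_succ_top (by lia), ih, χ₄_nat_eq_if_mod_four]
    split_ifs <;> lia

theorem sum_χ₄_coprime_two_mul (A : Finset ℕ) (n : ℕ) :
    ∑ s ∈ A with s.Coprime (2 * n), χ₄ s = ∑ s ∈ A with s.Coprime n, χ₄ s := by
  simp only [sum_filter]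
  refine sum_congr rfl fun s _ ↦ ?_
  rcases s.even_or_odd with hs | hs
  · simp only [χ₄_nat_eq_if_mod_four, Nat.even_iff.mp hs, if_true, ite_self]
  · simp only [Nat.coprime_mul_iff_right, and_iff_right (Nat.coprime_two_right.mpr hs)]

theorem sum_χ₄_coprime_eq_prod_primeFactors {n m : ℕ} (hm : Odd m) (hnm : n ∣ m) :
    ∑ s ∈ Icc 1 (2 * m) with s.Coprime (2 * n), χ₄ s = ∏ p ∈ n.primeFactors, (1 - χ₄ p) := by
  have full_sum (d : ℕ) (hd : d ∣ n) : ∑ t ∈ Icc 1 (2 * m / d), χ₄ t = 1 := by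
    obtain ⟨k, rfl⟩ := hd.trans hnm
    obtain ⟨hd_odd, hk_odd⟩ := Nat.odd_mul.mp hm
    rw [mul_left_comm, Nat.mul_div_cancel_left _ hd_odd.pos, sum_Icc_one_χ₄,
      if_pos (by grind)]
  rw [sum_χ₄_coprime_two_mul, sum_coprime_eq_mul_prod_primeFactors
    (fun a b ↦ by rw [Nat.cast_mul, map_mul]) (ne_zero_of_dvd_ne_zero hm.pos.ne' hnm) full_sum,
    one_mul]

theorem card_mod_four_eq_one_sub_card_mod_four_eq_three (A : Finset ℕ) :
    (#{s ∈ A | s % 4 = 1} : ℤ) - #{s ∈ A | s % 4 = 3} = ∑ s ∈ A, χ₄ s := by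
  simp only [card_filter, Nat.cast_sum, ← sum_sub_distrib, χ₄_nat_eq_if_mod_four]
  refine sum_congr rfl fun s _ ↦ ?_
  split_ifs <;> lia

theorem card_mod_four_eq_one_add_card_mod_four_eq_three {A : Finset ℕ} (hA : ∀ s ∈ A, Odd s) :
    #{s ∈ A | s % 4 = 1} + #{s ∈ A | s % 4 = 3} = #A := by
  rw [← card_filter_add_card_filter_not (s := A) (· % 4 = 1)]
  congr 2
  exact filter_congr fun s hs ↦ by grind [hA s hs]

theorem card_coprime_two_mul_Icc_pow {n r : ℕ} (hn : Odd n) (hr : r ≠ 0) :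
    #{s ∈ Icc 1 (2 * n ^ r) | s.Coprime (2 * n)} = (n ^ r).totient := by
  have coprime_iff (s : ℕ) : s.Coprime (2 * n) ↔ (2 * n ^ r).Coprime s := by
    rw [Nat.coprime_comm, Nat.coprime_mul_iff_left, Nat.coprime_mul_iff_left,
      Nat.coprime_pow_left_iff (Nat.pos_of_ne_zero hr)]
  simp only [coprime_iff]
  rw [← Nat.totient_two_mul_of_odd hn.pow, ← Nat.filter_coprime_Ico_eq_totient (2 * n ^ r) 1,
    add_comm 1, Ico_add_one_right_eq_Icc]

theorem statement12_general (l r : ℕ) (hl : Odd l) (hr : 1 ≤ r) :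
    2 * (#{s ∈ Icc 1 (2 * l ^ r) | Nat.gcd s (2 * l) = 1 ∧ s % 4 = 1} : ℤ) =
      (l ^ r).totient + ∏ p ∈ l.primeFactors, (1 - χ₄ p) ∧
    2 * (#{s ∈ Icc 1 (2 * l ^ r) | Nat.gcd s (2 * l) = 1 ∧ s % 4 = 3} : ℤ) =
      (l ^ r).totient - ∏ p ∈ l.primeFactors, (1 - χ₄ p) := by
  let A : Finset ℕ := {s ∈ Icc 1 (2 * l ^ r) | s.Coprime (2 * l)}
  have odd_of_mem (s : ℕ) (hs : s ∈ A) : Odd s :=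
    Nat.coprime_two_right.mp (mem_filter.mp hs).2.coprime_mul_right_right
  have card_sub := card_mod_four_eq_one_sub_card_mod_four_eq_three A
  have card_add := card_mod_four_eq_one_add_card_mod_four_eq_three odd_of_mem
  rw [sum_χ₄_coprime_eq_prod_primeFactors hl.pow (dvd_pow_self l (by lia))] at card_sub
  rw [card_coprime_two_mul_Icc_pow hl (by lia)] at card_add
  have filter_eq (v : ℕ) : {s ∈ Icc 1 (2 * l ^ r) | Nat.gcd s (2 * l) = 1 ∧ s % 4 = v} =
      {s ∈ A | s % 4 = v} := (filter_filter ..).symm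
  rw [filter_eq, filter_eq]
  lia

end ResiduesModFour

theorem statement12 (l r : ℕ) (hl : l.Prime) (hl4 : l % 4 = 3) (hr : 1 ≤ r) :
    ((Finset.Icc 1 (2 * l ^ r)).filter
        (fun s => Nat.gcd s (2 * l) = 1 ∧ s % 4 = 1)).card =
      Nat.totient (l ^ r) / 2 + 1 ∧
    ((Finset.Icc 1 (2 * l ^ r)).filter
        (fun s => Nat.gcd s (2 * l) = 1 ∧ s % 4 = 3)).card =
      Nat.totient (l ^ r) / 2 - 1 := by
  have counts := statement12_general l r (Nat.odd_iff.mpr (by lia)) hr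
  rw [hl.primeFactors, Finset.prod_singleton, ZMod.χ₄_nat_three_mod_four hl4] at counts
  lia
end
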